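/- For every ε > 0 there exists a constant C_ε > 0 such that for all u, v ∈ V, |b(k_ε u, v, u)| ≤ C_ε ‖u‖ · |u| · ‖v‖, where |·| is the L²(G) norm and ‖·‖ is the W^{1,2}_0(G) norm. -/

import Mathlib

open MeasureTheory Filter Topology ENNReal

noncomputable section

abbrev E3 := EuclideanSpace ℝ (Fin 3)

/-- The standard mollifier on `ℝ³` with normalizing constant `C`. -/
def stdMollifier (C : ℝ) (x : E3) : ℝ :=
  if ‖x‖ < 1 then C * Real.exp (1 / (‖x‖ ^ 2 - 1)) else 0

/-- The rescaled mollifier `η_ε`. -/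
def mollifier (C ε : ℝ) (x : E3) : ℝ := (1 / ε ^ 3) * stdMollifier C (ε⁻¹ • x)

/-- Mollification `k_ε u = η_ε ∗ u` of a vector field (componentwise convolution). -/
def mollify (C ε : ℝ) (u : E3 → E3) : E3 → E3 :=
  convolution (mollifier C ε) u (ContinuousLinearMap.lsmul ℝ ℝ) volume

/-- The Navier–Stokes trilinear form `b(u,v,w) = ∑_{i,j} ∫_G uᵢ ∂ᵢvⱼ wⱼ dx`. -/
def triForm (G : Set E3) (u v w : E3 → E3) : ℝ :=
  ∑ i : Fin 3, ∑ j : Fin 3,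
    ∫ x in G, u x i * fderiv ℝ v x (EuclideanSpace.single i 1) j * w x j

/-- Membership in `𝒱`: a smooth, compactly supported, divergence-free vector field on `G`. -/
def MemCalV (G : Set E3) (u : E3 → E3) : Prop :=
  ContDiff ℝ (⊤ : ℕ∞) u ∧ HasCompactSupport u ∧ tsupport u ⊆ G ∧
    ∀ x, ∑ i : Fin 3, fderiv ℝ u x (EuclideanSpace.single i 1) i = 0

/-- Membership in `V`, the closure of `𝒱` in `W^{1,2}₀(G)` (elements extended by zero to
all of `ℝ³`). -/
def MemV (G : Set E3) (u : E3 → E3) : Prop :=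
  (∀ x ∉ G, u x = 0) ∧
  ∃ φ : ℕ → E3 → E3, (∀ n, MemCalV G (φ n)) ∧
    Tendsto (fun n =>
      eLpNorm (fun x => u x - φ n x) 2 volume +
      eLpNorm (fun x => fderiv ℝ u x - fderiv ℝ (φ n) x) 2 volume) atTop (𝓝 0)


/-- The `H`-norm `|u|`, i.e. the `L²(G)` norm. -/
def Hnorm (G : Set E3) (u : E3 → E3) : ℝ≥0∞ := eLpNorm u 2 (volume.restrict G)

/-- The `V`-norm `‖u‖`, i.e. the `W^{1,2}₀(G)` norm. -/
def Vnorm (G : Set E3) (u : E3 → E3) : ℝ≥0∞ :=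
  eLpNorm u 2 (volume.restrict G) +
    eLpNorm (fun x => fderiv ℝ u x) 2 (volume.restrict G)

/-- Cauchy–Schwarz for the lower Lebesgue integral, with measurability required of only one
factor. -/
theorem lintegral_enorm_mul_le_eLpNorm_two {α E F : Type*} [MeasurableSpace α]
    [NormedAddCommGroup E] [MeasurableSpace E] [OpensMeasurableSpace E] [NormedAddCommGroup F]
    (μ : Measure α) {f : α → E} (hf : Measurable f) (g : α → F) :
    ∫⁻ x, ‖f x‖ₑ * ‖g x‖ₑ ∂μ ≤ eLpNorm f 2 μ * eLpNorm g 2 μ := by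
  obtain ⟨h, hh, hle, heq⟩ := exists_measurable_le_lintegral_eq (μ := μ)
    (fun x => ‖f x‖ₑ * ‖g x‖ₑ)
  have hquot : ∀ x, h x / ‖f x‖ₑ ≤ ‖g x‖ₑ := fun x =>
    ENNReal.div_le_of_le_mul' (hle x)
  have hprod : ∀ x, h x ≤ ‖f x‖ₑ * (h x / ‖f x‖ₑ) := by
    intro x
    by_cases h0 : ‖f x‖ₑ = 0
    · have := hle x
      simp only [h0, zero_mul] at this
      exact this.trans zero_le
    · exact (ENNReal.mul_div_cancel h0 enorm_ne_top).ge
  have hfe : Measurable fun x => ‖f x‖ₑ := hf.enorm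
  have key := ENNReal.lintegral_mul_le_Lp_mul_Lq μ Real.HolderConjugate.two_two
    hfe.aemeasurable (hh.div hfe).aemeasurable
  rw [heq, eLpNorm_eq_lintegral_rpow_enorm_toReal two_ne_zero ENNReal.ofNat_ne_top,
    eLpNorm_eq_lintegral_rpow_enorm_toReal two_ne_zero ENNReal.ofNat_ne_top]
  simp only [ENNReal.toReal_ofNat]
  refine (lintegral_mono hprod).trans (key.trans ?_)
  gcongr with x
  exact hquot x

theorem enorm_mollifier_le {C ε : ℝ} (hC : 0 < C) (hε : 0 < ε) (x : E3) :
    ‖mollifier C ε x‖ₑ ≤ ENNReal.ofReal (C / ε ^ 3) := by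
  have hstd : ∀ y : E3, 0 ≤ stdMollifier C y ∧ stdMollifier C y ≤ C := by
    intro y
    unfold stdMollifier
    split_ifs with hy
    · refine ⟨by positivity, mul_le_of_le_one_right hC.le (Real.exp_le_one_iff.2 ?_)⟩
      have : ‖y‖ ^ 2 ≤ 1 := pow_le_one₀ (norm_nonneg y) hy.le
      exact one_div_nonpos.2 (by linarith)
    · exact ⟨le_rfl, hC.le⟩
  obtain ⟨h0, h1⟩ := hstd (ε⁻¹ • x)
  have hpos : 0 ≤ mollifier C ε x := by unfold mollifier; positivity
  rw [Real.enorm_of_nonneg hpos]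
  refine ENNReal.ofReal_le_ofReal ?_
  calc mollifier C ε x ≤ (1 / ε ^ 3) * C := by unfold mollifier; gcongr
    _ = C / ε ^ 3 := by ring

/-- Mollification maps `L²(G)` into bounded functions. -/
theorem enorm_mollify_le {G : Set E3} {C ε : ℝ} (hC : 0 < C) (hε : 0 < ε) {u : E3 → E3}
    (hu : ∀ x ∉ G, u x = 0) (x : E3) :
    ‖mollify C ε u x‖ₑ ≤
      ENNReal.ofReal (C / ε ^ 3) * (volume G ^ (1 / 2 : ℝ) * Hnorm G u) := by
  have hsupp : (fun y => ‖u y‖ₑ).support ⊆ G := by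
    intro y hy
    by_contra hyG
    exact hy (by simp [hu y hyG])
  have hone : eLpNorm (fun _ : E3 => (1 : ℝ)) 2 (volume.restrict G) =
      volume G ^ (1 / 2 : ℝ) := by
    rw [eLpNorm_const' _ two_ne_zero ENNReal.ofNat_ne_top]
    simp
  calc ‖mollify C ε u x‖ₑ
      ≤ ∫⁻ t, ‖mollifier C ε t • u (x - t)‖ₑ := by
        simpa [mollify, convolution_def] using
          enorm_integral_le_lintegral_enorm (μ := volume)
            (fun t => mollifier C ε t • u (x - t))
    _ ≤ ∫⁻ t, ENNReal.ofReal (C / ε ^ 3) * ‖u (x - t)‖ₑ := by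
        refine lintegral_mono fun t => ?_
        simp only [enorm_smul]
        gcongr
        exact enorm_mollifier_le hC hε t
    _ = ENNReal.ofReal (C / ε ^ 3) * ∫⁻ y in G, ‖u y‖ₑ := by
        rw [lintegral_const_mul' _ _ ENNReal.ofReal_ne_top,
          lintegral_sub_left_eq_self (fun y => ‖u y‖ₑ) x,
          setLIntegral_eq_of_support_subset hsupp]
    _ ≤ ENNReal.ofReal (C / ε ^ 3) * (volume G ^ (1 / 2 : ℝ) * Hnorm G u) := by
        gcongr
        have := lintegral_enorm_mul_le_eLpNorm_two (volume.restrict G)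
          (measurable_const (a := (1 : ℝ))) u
        rw [hone] at this
        simpa [Hnorm] using this

theorem enorm_apply_le_enorm (x : E3) (i : Fin 3) : ‖x i‖ₑ ≤ ‖x‖ₑ :=
  enorm_le_iff_norm_le.2 (PiLp.norm_apply_le x i)

theorem enorm_apply_single_le_enorm (L : E3 →L[ℝ] E3) (i j : Fin 3) :
    ‖L (EuclideanSpace.single i 1) j‖ₑ ≤ ‖L‖ₑ := by
  refine (enorm_apply_le_enorm _ j).trans (enorm_le_iff_norm_le.2 ?_)
  simpa using L.le_opNorm (EuclideanSpace.single i (1 : ℝ))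

/-- The trilinear form is bounded on `L^∞ × W^{1,2} × L²`. -/
theorem enorm_triForm_le (G : Set E3) {w : E3 → E3} (v u : E3 → E3) {M : ℝ≥0∞} (hM : M ≠ ∞)
    (hw : ∀ x, ‖w x‖ₑ ≤ M) :
    ‖triForm G w v u‖ₑ ≤ 9 * (M * (Vnorm G v * Hnorm G u)) := by
  have hterm : ∀ i j : Fin 3,
      ‖∫ x in G, w x i * fderiv ℝ v x (EuclideanSpace.single i 1) j * u x j‖ₑ ≤
        M * (Vnorm G v * Hnorm G u) := by
    intro i j
    calc _ ≤ ∫⁻ x in G, ‖w x i * fderiv ℝ v x (EuclideanSpace.single i 1) j * u x j‖ₑ :=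
          enorm_integral_le_lintegral_enorm _
      _ ≤ ∫⁻ x in G, M * (‖fderiv ℝ v x‖ₑ * ‖u x‖ₑ) := by
          refine lintegral_mono fun x => ?_
          simp only [enorm_mul, mul_assoc]
          gcongr
          · exact (enorm_apply_le_enorm _ i).trans (hw x)
          · exact enorm_apply_single_le_enorm _ i j
          · exact enorm_apply_le_enorm _ j
      _ = M * ∫⁻ x in G, ‖fderiv ℝ v x‖ₑ * ‖u x‖ₑ := lintegral_const_mul' _ _ hM
      _ ≤ M * (Vnorm G v * Hnorm G u) := by
          gcongr
          refine (lintegral_enorm_mul_le_eLpNorm_two _ (measurable_fderiv ℝ v) u).trans ?_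
          unfold Vnorm Hnorm
          gcongr
          exact le_add_self
  calc ‖triForm G w v u‖ₑ
      ≤ ∑ i : Fin 3, ∑ j : Fin 3,
          ‖∫ x in G, w x i * fderiv ℝ v x (EuclideanSpace.single i 1) j * u x j‖ₑ :=
        (enorm_sum_le _ _).trans (Finset.sum_le_sum fun i _ => enorm_sum_le _ _)
    _ ≤ ∑ _i : Fin 3, ∑ _j : Fin 3, M * (Vnorm G v * Hnorm G u) :=
        Finset.sum_le_sum fun i _ => Finset.sum_le_sum fun j _ => hterm i j
    _ = 9 * (M * (Vnorm G v * Hnorm G u)) := by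
        simp only [Finset.sum_const, Finset.card_univ, Fintype.card_fin, nsmul_eq_mul]
        rw [← mul_assoc]
        norm_num

theorem triForm_eq_zero_of_vnorm_eq_zero {G : Set E3} (w : E3 → E3) {v : E3 → E3} (u : E3 → E3)
    (hv : Vnorm G v = 0) : triForm G w v u = 0 := by
  have hgrad : (fun x => fderiv ℝ v x) =ᵐ[volume.restrict G] 0 :=
    (eLpNorm_eq_zero_iff (measurable_fderiv ℝ v).aestronglyMeasurable two_ne_zero).1
      (add_eq_zero.1 hv).2
  refine Finset.sum_eq_zero fun i _ => Finset.sum_eq_zero fun j _ => ?_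
  refine integral_eq_zero_of_ae ?_
  filter_upwards [hgrad] with x hx
  simp [hx]

/-- For every `ε > 0` there exists a constant `C_ε > 0` such that for all
`u, v ∈ V`, `|b(k_ε u, v, u)| ≤ C_ε ‖u‖ · |u| · ‖v‖`, where `|·|` is the `L²(G)` norm and
`‖·‖` is the `W^{1,2}₀(G)` norm. -/
theorem statement2
    (G : Set E3) (hGopen : IsOpen G) (hGbdd : Bornology.IsBounded G)
    (C : ℝ) (hC : 0 < C) (hη : ∫ x, stdMollifier C x = 1)
    (ε : ℝ) (hε : 0 < ε) :
    ∃ Cε : ℝ, 0 < Cε ∧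
      ∀ u v : E3 → E3, MemV G u → MemV G v →
        ENNReal.ofReal |triForm G (mollify C ε u) v u|
          ≤ ENNReal.ofReal Cε * Vnorm G u * Hnorm G u * Vnorm G v := by
  have hvol : volume G ^ (1 / 2 : ℝ) ≠ ∞ :=
    ENNReal.rpow_ne_top_of_nonneg (by norm_num) hGbdd.measure_lt_top.ne
  set K : ℝ≥0∞ := 9 * (ENNReal.ofReal (C / ε ^ 3) * volume G ^ (1 / 2 : ℝ)) with hK
  have hKtop : K ≠ ∞ := by finiteness
  refine ⟨K.toReal + 1, by positivity, fun u v hu _ => ?_⟩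
  have hKle : K ≤ ENNReal.ofReal (K.toReal + 1) := by
    rw [ENNReal.le_ofReal_iff_toReal_le hKtop (by positivity)]
    linarith
  have hHV : Hnorm G u ≤ Vnorm G u := le_self_add
  rw [← Real.enorm_eq_ofReal_abs]
  by_cases hv : Vnorm G v = 0
  · simp [triForm_eq_zero_of_vnorm_eq_zero _ u hv]
  by_cases hH : Hnorm G u = ∞
  · have hV : Vnorm G u = ∞ := top_le_iff.1 (hH ▸ hHV)
    have hpos : ENNReal.ofReal (K.toReal + 1) ≠ 0 :=
      (ENNReal.ofReal_pos.2 (by positivity)).ne'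
    rw [hH, hV, ENNReal.mul_top hpos, ENNReal.top_mul_top, ENNReal.top_mul hv]
    exact le_top
  calc ‖triForm G (mollify C ε u) v u‖ₑ
      ≤ 9 * (ENNReal.ofReal (C / ε ^ 3) * (volume G ^ (1 / 2 : ℝ) * Hnorm G u) *
          (Vnorm G v * Hnorm G u)) :=
        enorm_triForm_le G v u (by finiteness) (enorm_mollify_le hC hε hu.1)
    _ = K * Hnorm G u * Hnorm G u * Vnorm G v := by rw [hK]; ring
    _ ≤ ENNReal.ofReal (K.toReal + 1) * Vnorm G u * Hnorm G u * Vnorm G v := by gcongr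

end
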